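/- Let f, Δ : [-π,π] → ℝ be continuous functions with f(θ) > 0 for all θ ∈ [-π,π], and define the symmetrized divergence δ(f₁,f₂) := δ_{a/g}(f₁,f₂) + δ_{a/g}(f₂,f₁). Then lim_{ε→0} δ(f, f+εΔ)/ε² = g_f(Δ), where g_f(Δ) := ∫ (Δ/f)² dμ − ( ∫ (Δ/f) dμ )²; that is, the quadratic term of the symmetrized divergence δ(f, f+Δ) in the perturbation Δ coincides (modulo scaling) with the same Riemannian pseudo-metric g_f(Δ) as for δ_{a/g}. -/

import Mathlib

open MeasureTheory Real Filter Topology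

/-- The normalized Lebesgue measure `dθ/(2π)` on `[-π, π]`. -/
noncomputable def μ : Measure ℝ :=
  (ENNReal.ofReal (2 * Real.pi)⁻¹) • (volume.restrict (Set.Icc (-Real.pi) Real.pi))

/-- The arithmetic/geometric divergence between spectral densities. -/
noncomputable def δag (f₁ f₂ : ℝ → ℝ) : ℝ :=
  Real.log (∫ θ, f₁ θ / f₂ θ ∂μ) - ∫ θ, Real.log (f₁ θ / f₂ θ) ∂μ

/-- The Riemannian pseudo-metric at `f` applied to a perturbation `Δ`. -/
noncomputable def gf (f Δ : ℝ → ℝ) : ℝ :=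
  (∫ θ, (Δ θ / f θ) ^ 2 ∂μ) - (∫ θ, Δ θ / f θ ∂μ) ^ 2

instance μ_prob : IsProbabilityMeasure μ := by
  constructor
  have hp := Real.pi_pos
  simp only [μ, Measure.smul_apply, Measure.restrict_apply_univ, Real.volume_Icc, smul_eq_mul]
  rw [← ENNReal.ofReal_mul (by positivity), ← ENNReal.ofReal_one]
  congr 1
  field_simp
  ring

theorem μ_ae : ∀ᵐ θ ∂μ, θ ∈ Set.Icc (-Real.pi) Real.pi := by
  unfold μ
  exact Measure.ae_smul_measure (ae_restrict_mem measurableSet_Icc) _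

theorem symmetrized_divergence_quadratic_term (f Δ : ℝ → ℝ)
    (hf : Continuous f) (hΔ : Continuous Δ)
    (hfpos : ∀ θ ∈ Set.Icc (-Real.pi) Real.pi, 0 < f θ) :
    Tendsto
      (fun ε : ℝ =>
        (δag f (fun θ => f θ + ε * Δ θ) + δag (fun θ => f θ + ε * Δ θ) f) / ε ^ 2)
      (𝓝[≠] 0) (𝓝 (gf f Δ)) := by
  obtain ⟨M, hM⟩ : ∃ M, ∀ θ ∈ Set.Icc (-Real.pi) Real.pi, ‖Δ θ / f θ‖ ≤ M :=
    isCompact_Icc.exists_bound_of_continuousOn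
      (hΔ.continuousOn.div hf.continuousOn fun θ h => (hfpos θ h).ne')
  have hM0 : 0 ≤ M :=
    (norm_nonneg _).trans (hM 0 ⟨by linarith [Real.pi_pos], Real.pi_pos.le⟩)
  set u : ℝ → ℝ := fun θ => Δ θ / f θ with hu
  have hum : Measurable u := hΔ.measurable.div hf.measurable
  have huM : ∀ᵐ θ ∂μ, |u θ| ≤ M := by
    filter_upwards [μ_ae] with θ h using hM θ h
  have hui : Integrable u μ := Integrable.of_bound hum.aestronglyMeasurable M huM
  set m := ∫ θ, u θ ∂μ with hm
  set R : ℝ → ℝ := fun ε => ∫ θ, u θ ^ 2 / (1 + ε * u θ) ∂μ with hR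
  have hsmall : ∀ᶠ ε : ℝ in 𝓝 0, |ε| * M < 1 / 2 := by
    have : Tendsto (fun ε : ℝ => |ε| * M) (𝓝 0) (𝓝 0) := by
      have h : Continuous (fun ε : ℝ => |ε| * M) := by fun_prop
      simpa using h.tendsto 0
    exact this.eventually_lt_const (by norm_num)
  have hlow : ∀ ε x : ℝ, |ε| * M < 1 / 2 → |x| ≤ M → 1 / 2 ≤ 1 + ε * x := by
    intro ε x h hx
    have h1 : |ε * x| ≤ |ε| * M := by
      rw [abs_mul]; gcongr
    linarith [neg_abs_le (ε * x)]
  have hbd : ∀ ε x : ℝ, |ε| * M < 1 / 2 → |x| ≤ M → ‖x ^ 2 / (1 + ε * x)‖ ≤ 2 * M ^ 2 := by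
    intro ε x h hx
    have h1 := hlow ε x h hx
    have h2 : x ^ 2 ≤ M ^ 2 := sq_le_sq' (by linarith [neg_abs_le x]) ((le_abs_self x).trans hx)
    rw [Real.norm_of_nonneg (by positivity), div_le_iff₀ (by linarith)]
    nlinarith [sq_nonneg M]
  have hmeas : ∀ ε : ℝ, AEStronglyMeasurable (fun θ => u θ ^ 2 / (1 + ε * u θ)) μ := fun ε =>
    ((hum.pow_const 2).div ((hum.const_mul ε).const_add 1)).aestronglyMeasurable
  have hRi : ∀ ε : ℝ, |ε| * M < 1 / 2 → Integrable (fun θ => u θ ^ 2 / (1 + ε * u θ)) μ := by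
    intro ε h
    refine Integrable.of_bound (hmeas ε) (2 * M ^ 2) ?_
    filter_upwards [huM] with θ hθ using hbd ε _ h hθ
  have hRt : Tendsto R (𝓝 0) (𝓝 (∫ θ, u θ ^ 2 ∂μ)) := by
    refine tendsto_integral_filter_of_dominated_convergence (fun _ => 2 * M ^ 2)
      (Eventually.of_forall hmeas) ?_ (integrable_const _) ?_
    · filter_upwards [hsmall] with ε h
      filter_upwards [huM] with θ hθ using hbd ε _ h hθ
    · refine Eventually.of_forall fun θ => ?_
      have h : ContinuousAt (fun ε : ℝ => u θ ^ 2 / (1 + ε * u θ)) 0 := by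
        apply ContinuousAt.div <;> first | fun_prop | simp
      simpa [ContinuousAt] using h
  have hA : ∀ ε : ℝ, |ε| * M < 1 / 2 →
      ∫ θ, f θ / (f θ + ε * Δ θ) ∂μ = 1 - ε * m + ε ^ 2 * R ε := by
    intro ε h
    have h1 : ∫ θ, f θ / (f θ + ε * Δ θ) ∂μ
        = ∫ θ, ((1 - ε * u θ) + ε ^ 2 * (u θ ^ 2 / (1 + ε * u θ))) ∂μ := by
      apply integral_congr_ae
      filter_upwards [huM, μ_ae] with θ hθ hmem
      have hf0 := hfpos θ hmem
      have hl := hlow ε _ h hθ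
      have e : f θ + ε * Δ θ = f θ * (1 + ε * u θ) := by
        simp only [hu]; field_simp
      rw [e]
      have hne : 1 + ε * u θ ≠ 0 := by linarith
      generalize u θ = x at *
      field_simp
      ring
    have hi : Integrable (fun θ => 1 - ε * u θ) μ :=
      (integrable_const (1 : ℝ)).sub (hui.const_mul ε)
    rw [h1, integral_add hi ((hRi ε h).const_mul _),
      integral_sub (integrable_const _) (hui.const_mul _), integral_const_mul, integral_const_mul]
    simp [hm, hR]
  have hB : ∀ ε : ℝ, ∫ θ, (f θ + ε * Δ θ) / f θ ∂μ = 1 + ε * m := by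
    intro ε
    have h1 : ∫ θ, (f θ + ε * Δ θ) / f θ ∂μ = ∫ θ, (1 + ε * u θ) ∂μ := by
      apply integral_congr_ae
      filter_upwards [μ_ae] with θ hmem
      have hf0 := hfpos θ hmem
      simp only [hu]; field_simp
    rw [h1, integral_add (integrable_const _) (hui.const_mul _), integral_const_mul]
    simp [hm]
  have hL : ∀ ε : ℝ, ∫ θ, Real.log (f θ / (f θ + ε * Δ θ)) ∂μ
      = - ∫ θ, Real.log ((f θ + ε * Δ θ) / f θ) ∂μ := by
    intro ε
    rw [← integral_neg]
    congr 1
    ext θ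
    rw [← Real.log_inv, inv_div]
  have hid : Tendsto (fun ε : ℝ => ε) (𝓝 0) (𝓝 0) := tendsto_id
  have hAt : Tendsto (fun ε : ℝ => 1 - ε * m + ε ^ 2 * R ε) (𝓝 0) (𝓝 1) := by
    simpa using ((hid.mul_const m).const_sub 1).add ((hid.pow 2).mul hRt)
  have hBt : Tendsto (fun ε : ℝ => 1 + ε * m) (𝓝 0) (𝓝 1) := by
    simpa using (hid.mul_const m).const_add 1
  set Q : ℝ → ℝ := fun ε => R ε * (1 + ε * m) - m ^ 2 with hQ
  have hQt : Tendsto Q (𝓝 0) (𝓝 (gf f Δ)) := by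
    simpa [gf] using (hRt.mul hBt).sub_const (m ^ 2)
  set g := dslope (fun x : ℝ => Real.log (1 + x)) 0 with hg
  have hder : HasDerivAt (fun x : ℝ => Real.log (1 + x)) 1 0 := by
    simpa using ((hasDerivAt_id (0:ℝ)).const_add 1).log (by simp)
  have hg0 : g 0 = 1 := by rw [hg, dslope_same, hder.deriv]
  have hgc : Tendsto g (𝓝 0) (𝓝 1) := by
    have : ContinuousAt g 0 := continuousAt_dslope_same.2 hder.differentiableAt
    rw [← hg0]; exact this
  have hgx : ∀ x, Real.log (1 + x) = x * g x := by
    intro x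
    have := sub_smul_dslope (fun x : ℝ => Real.log (1 + x)) 0 x
    simpa using this.symm
  have hz : Tendsto (fun ε : ℝ => ε ^ 2 * Q ε) (𝓝 0) (𝓝 0) := by
    simpa using (hid.pow 2).mul hQt
  have hfin : Tendsto (fun ε => Q ε * g (ε ^ 2 * Q ε)) (𝓝 0) (𝓝 (gf f Δ)) := by
    simpa using hQt.mul (hgc.comp hz)
  refine (hfin.mono_left nhdsWithin_le_nhds).congr' ?_
  filter_upwards [self_mem_nhdsWithin, nhdsWithin_le_nhds hsmall,
    nhdsWithin_le_nhds (hAt.eventually_ne one_ne_zero),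
    nhdsWithin_le_nhds (hBt.eventually_ne one_ne_zero)] with ε hε hs hAn hBn
  have hε' : ε ≠ 0 := hε
  have key : δag f (fun θ => f θ + ε * Δ θ) + δag (fun θ => f θ + ε * Δ θ) f
      = Real.log (1 + ε ^ 2 * Q ε) := by
    unfold δag
    rw [hL ε, hA ε hs, hB ε]
    have e : 1 + ε ^ 2 * Q ε = (1 - ε * m + ε ^ 2 * R ε) * (1 + ε * m) := by
      simp only [hQ]; ring
    rw [e, Real.log_mul hAn hBn]
    ring
  rw [key, hgx]
  field_simp
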